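/- For every complex number q with 0 < |q| < 1, one has ∑_{i,j,k,l ≥ 0} q^{2i²+2j²+2k²+2l²−2ij−2ik−2il+2jk+2jl−3i+3j+3k+2l} / ((q²;q²)_i (q²;q²)_j (q²;q²)_k (q²;q²)_l) = q^{−1} · J_6² / (J_1 J_3). -/

import Mathlib

open scoped BigOperators

/-- The infinite q-Pochhammer symbol `(a; q)_∞ = ∏_{k=0}^∞ (1 - a q^k)`. -/
noncomputable def qPochInf (a q : ℂ) : ℂ := ∏' n : ℕ, (1 - a * q ^ n)

/-- The finite q-Pochhammer symbol `(a; q)_n = ∏_{k=0}^{n-1} (1 - a q^k)`. -/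
noncomputable def qPoch (a q : ℂ) (n : ℕ) : ℂ :=
  Finset.prod (Finset.range n) (fun k => 1 - a * q ^ k)

/-- `J_m = (q^m; q^m)_∞`. -/
noncomputable def J (q : ℂ) (m : ℕ) : ℂ := qPochInf (q ^ m) (q ^ m)

/-- `J_{a,m} = (q^a; q^m)_∞ (q^{m-a}; q^m)_∞ (q^m; q^m)_∞`. -/
noncomputable def Jam (q : ℂ) (a m : ℕ) : ℂ :=
  qPochInf (q ^ a) (q ^ m) * qPochInf (q ^ (m - a)) (q ^ m) * qPochInf (q ^ m) (q ^ m)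

open Filter Topology

noncomputable def ee (p : ℂ) (n : ℤ) : ℂ := if n < 0 then 0 else (qPoch (p^2) (p^2) n.toNat)⁻¹

lemma ee_neg (p : ℂ) {n : ℤ} (h : n < 0) : ee p n = 0 := by simp [ee, h]

lemma ee_nat (p : ℂ) (n : ℕ) : ee p n = (qPoch (p^2) (p^2) n)⁻¹ := by simp [ee]

lemma fac_ne {p : ℂ} (h1 : ‖p‖ < 1) (n : ℕ) : 1 - p^2 * (p^2)^n ≠ 0 := by
  intro h
  have h2 : ‖p^2 * (p^2)^n‖ < 1 := by
    rw [← pow_succ', ← pow_mul, norm_pow]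
    exact pow_lt_one₀ (norm_nonneg _) h1 (by omega)
  rw [← sub_eq_zero.mp h] at h2
  simp at h2

lemma geo_sum {p : ℂ} (h1 : ‖p‖ < 1) (a : ℂ) {m : ℕ} (hm : m ≠ 0) :
    Summable fun n : ℕ => ‖a * (p^m)^n‖ := by
  simp only [norm_mul, norm_pow]
  apply Summable.mul_left
  exact summable_geometric_of_lt_one (by positivity) (pow_lt_one₀ (norm_nonneg _) h1 hm)

lemma mult_add {p : ℂ} (h1 : ‖p‖ < 1) (a : ℂ) {m : ℕ} (hm : m ≠ 0) :
    Multipliable fun n : ℕ => 1 + a * (p^m)^n :=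
  multipliable_one_add_of_summable (geo_sum h1 a hm)

lemma mult_sub {p : ℂ} (h1 : ‖p‖ < 1) (a : ℂ) {m : ℕ} (hm : m ≠ 0) :
    Multipliable fun n : ℕ => 1 - a * (p^m)^n := by
  have := mult_add h1 (-a) hm
  simpa [sub_eq_add_neg] using this

lemma P_ne {p : ℂ} (h1 : ‖p‖ < 1) : qPochInf (p^2) (p^2) ≠ 0 := by
  have := tprod_one_add_ne_zero_of_summable (f := fun n : ℕ => -(p^2) * (p^2)^n) ?_
    (geo_sum h1 _ two_ne_zero)
  · simpa [qPochInf, sub_eq_add_neg] using this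
  · intro n
    have := fac_ne h1 n
    simpa [sub_eq_add_neg] using this

lemma ee_rec {p : ℂ} (h1 : ‖p‖ < 1) (n : ℤ) :
    ee p (n - 1) = (1 - p^(2*n)) * ee p n := by
  rcases lt_trichotomy n 0 with h | h | h
  · rw [ee_neg _ h, ee_neg _ (by omega)]; simp
  · subst h; rw [ee_neg _ (by omega)]; simp
  · obtain ⟨k, rfl⟩ : ∃ k : ℕ, n = (k+1 : ℕ) := ⟨(n-1).toNat, by omega⟩
    rw [ee_nat, show (((k+1:ℕ):ℤ) - 1) = (k:ℕ) by push_cast; ring, ee_nat]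
    unfold qPoch
    rw [Finset.prod_range_succ]
    have e : p ^ (2 * ((k+1:ℕ):ℤ)) = p^2 * (p^2)^k := by
      rw [← pow_succ', ← pow_mul, ← zpow_natCast]; push_cast; rfl
    rw [e, mul_inv, mul_comm, mul_assoc, inv_mul_cancel₀ (fac_ne h1 k), mul_one]

lemma ee_tendsto {p : ℂ} (h1 : ‖p‖ < 1) :
    Tendsto (fun n : ℕ => ee p n) atTop (𝓝 (qPochInf (p^2) (p^2))⁻¹) := by
  simp only [ee_nat]
  exact ((mult_sub h1 (p^2) two_ne_zero).tendsto_prod_tprod_nat).inv₀ (P_ne h1)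

lemma ee_bdd {p : ℂ} (h1 : ‖p‖ < 1) : ∃ C : ℝ, 0 ≤ C ∧ ∀ n, ‖ee p n‖ ≤ C := by
  obtain ⟨C, hC⟩ := (Metric.isBounded_range_of_tendsto _ (ee_tendsto h1)).exists_norm_le
  refine ⟨max C 0, le_max_right _ _, fun n => ?_⟩
  rcases lt_or_ge n 0 with h | h
  · simp [ee_neg _ h]
  · lift n to ℕ using h
    exact (hC _ ⟨n, rfl⟩).trans (le_max_left _ _)

lemma th_sum {s : ℝ} (h0 : 0 < s) (h1 : s < 1) {a : ℤ} (ha : 1 ≤ a) (c : ℤ) :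
    Summable fun n : ℤ => s ^ (a*n^2 + c*n) := by
  have hg : Summable fun n : ℤ => s ^ (-(|c|+1)^2) * s ^ |n| := by
    apply Summable.mul_left
    have := summable_geometric_of_lt_one h0.le h1
    apply Summable.of_nat_of_neg <;> simpa using this
  refine Summable.of_nonneg_of_le (fun n => by positivity) (fun n => ?_) hg
  rw [← zpow_add₀ h0.ne']
  apply zpow_le_zpow_right_of_le_one₀ h0 h1.le
  have h2 : -(|c| * |n|) ≤ c*n := by rw [← abs_mul]; exact neg_abs_le _
  have h3 : n^2 = |n|^2 := (sq_abs n).symm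
  have := abs_nonneg n
  have := abs_nonneg c
  nlinarith [mul_nonneg (sub_nonneg.mpr ha) (sq_nonneg n), sq_nonneg (|n| - (|c|+1))]

lemma thC {p : ℂ} (h0 : 0 < ‖p‖) (h1 : ‖p‖ < 1) {a : ℤ} (ha : 1 ≤ a) (c d : ℤ) :
    Summable fun n : ℤ => ‖p ^ (a*n^2 + c*n + d)‖ := by
  have hp : p ≠ 0 := norm_pos_iff.mp h0
  simp only [zpow_add₀ hp _ d, norm_mul]
  apply Summable.mul_right
  simpa using th_sum h0 h1 ha c

lemma thE {p : ℂ} (h0 : 0 < ‖p‖) (h1 : ‖p‖ < 1) {a : ℤ} (ha : 1 ≤ a) (c d : ℤ) (x y : ℤ → ℤ)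
    (f : ℤ → ℤ) (hf : ∀ n, f n = a*n^2 + c*n + d) :
    Summable fun n : ℤ => p ^ (f n) * (ee p (x n) * ee p (y n)) := by
  obtain ⟨C, hC0, hC⟩ := ee_bdd h1
  refine Summable.of_norm_bounded ((thC h0 h1 ha c d).mul_right (C*C)) fun n => ?_
  rw [norm_mul, norm_mul, hf]
  gcongr <;> apply hC

noncomputable def DD (p : ℂ) (m : ℤ) : ℂ := ∑' j : ℤ, p^(2*j*(j+m)) * (ee p j * ee p (j+m))

lemma DD_rec {p : ℂ} (h0 : 0 < ‖p‖) (h1 : ‖p‖ < 1) (m : ℤ) :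
    DD p m - DD p (m+1) = p^(2*(m+1)) * (DD p (m+2) - DD p (m+1)) := by
  have hp : p ≠ 0 := norm_pos_iff.mp h0
  have S : ∀ m, Summable fun j : ℤ => p^(2*j*(j+m)) * (ee p j * ee p (j+m)) := fun m =>
    thE h0 h1 (a := 2) (by norm_num) (2*m) 0 _ _ _ (fun n => by ring)
  have S2 : Summable fun j : ℤ => p^(2*j*(j+m)) * (ee p (j-1) * ee p (j+m+1)) := 
    thE h0 h1 (a := 2) (by norm_num) (2*m) 0 (fun j => j-1) (fun j => j+m+1) _ (fun n => by ring)
  have e1 : ∑' j : ℤ, p^(2*j*(j+m)) * (ee p (j-1) * ee p (j+m+1)) = p^(2*(m+1)) * DD p (m+2) := by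
    rw [← (Equiv.addRight (1:ℤ)).tsum_eq, DD, ← tsum_mul_left]
    congr 1; ext j
    simp only [Equiv.coe_addRight]
    rw [← mul_assoc (p^(2*(m+1))), ← zpow_add₀ hp]
    congr 1
    · ring
    · congr 1 <;> congr 1 <;> ring
  rw [mul_sub, ← e1, DD, DD, ← (S m).tsum_sub (S (m+1)), ← tsum_mul_left,
    ← S2.tsum_sub ((S (m+1)).mul_left _)]
  congr 1; ext j
  have r1 := ee_rec h1 j
  have r2 := ee_rec h1 (j+m+1)
  rw [show j+m+1-1 = j+m by ring] at r2
  rw [r1, r2, show j + (m+1) = j+m+1 by ring]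
  have z1 : p^(2*j*(j+m+1)) = p^(2*j*(j+m)) * p^(2*j) := by
    rw [← zpow_add₀ hp]; congr 1; ring
  have z2 : p^(2*(j+m+1)) = p^(2*j) * p^(2*(m+1)) := by
    rw [← zpow_add₀ hp]; congr 1; ring
  rw [z1, z2]; ring

lemma DD_tendsto {p : ℂ} (h0 : 0 < ‖p‖) (h1 : ‖p‖ < 1) :
    Tendsto (fun m : ℕ => DD p m) atTop (𝓝 (qPochInf (p^2) (p^2))⁻¹) := by
  have hp : p ≠ 0 := norm_pos_iff.mp h0
  obtain ⟨C, hC0, hC⟩ := ee_bdd h1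
  have key := tendsto_tsum_of_dominated_convergence (𝓕 := atTop)
    (f := fun (m : ℕ) (j : ℤ) => p^(2*j*(j+m)) * (ee p j * ee p (j+m)))
    (g := fun j => if j = 0 then (qPochInf (p^2) (p^2))⁻¹ else 0)
    ((thC h0 h1 (a := 2) (by norm_num) 0 0).mul_right (C*C)) ?_ ?_
  · simpa [DD] using key
  · intro j
    rcases lt_trichotomy j 0 with h | h | h
    · simp [ee_neg _ h, h.ne]
    · subst h
      have := ee_tendsto h1
      have e0 : ee p 0 = 1 := by simp [ee, qPoch]
      simpa [e0] using this
    · rw [if_neg h.ne']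
      lift j to ℕ using h.le
      have hj : 2*j ≠ 0 := by omega
      have t1 : Tendsto (fun m : ℕ => ‖p‖^(2*j*j) * (‖p‖^(2*j))^m * (C*C)) atTop (𝓝 0) := by
        have := tendsto_pow_atTop_nhds_zero_of_lt_one (r := ‖p‖^(2*j)) (by positivity)
          (pow_lt_one₀ h0.le h1 hj)
        simpa using (this.const_mul (‖p‖^(2*j*j))).mul_const (C*C)
      refine squeeze_zero_norm (fun m => ?_) t1
      rw [norm_mul, norm_mul]
      have : ‖p ^ (2*(j:ℤ)*(j+m))‖ = ‖p‖^(2*j*j) * (‖p‖^(2*j))^m := by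
        rw [← pow_mul, ← pow_add, norm_zpow, ← zpow_natCast]; congr 1; push_cast; ring
      rw [this]
      gcongr <;> apply hC
  · refine Eventually.of_forall fun m j => ?_
    rcases lt_or_ge j 0 with h | h
    · simp only [ee_neg _ h, zero_mul, mul_zero, norm_zero]; positivity
    · rw [norm_mul, norm_mul]
      gcongr ?_ * (?_ * ?_)
      · rw [norm_zpow, norm_zpow]
        apply zpow_le_zpow_right_of_le_one₀ h0 h1.le
        have : 0 ≤ j * m := by positivity
        nlinarith
      · apply hC
      · apply hC

lemma DD_eq {p : ℂ} (h0 : 0 < ‖p‖) (h1 : ‖p‖ < 1) (m : ℤ) :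
    DD p m = (qPochInf (p^2) (p^2))⁻¹ := by
  have T := DD_tendsto h0 h1
  set d : ℕ → ℂ := fun m => DD p m - DD p ((m+1 : ℕ)) with hd
  have Td : Tendsto d atTop (𝓝 0) := by
    have := T.sub ((tendsto_add_atTop_iff_nat 1).mpr T)
    simpa [hd] using this
  have step : ∀ m, ‖d m‖ ≤ ‖d (m+1)‖ := by
    intro m
    have r := DD_rec h0 h1 m
    have : d m = p^(2*(m+1)) * -(d (m+1)) := by
      simp only [hd]; push_cast at r ⊢
      rw [show (m:ℤ)+1+1 = m+2 by ring, r, ← zpow_natCast]; push_cast; ring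
    rw [this, norm_mul, norm_neg, norm_pow]
    exact mul_le_of_le_one_left (norm_nonneg _) (pow_le_one₀ h0.le h1.le)
  have mono : Monotone fun m => ‖d m‖ := monotone_nat_of_le_succ step
  have dz : ∀ m, d m = 0 := fun m => by
    have := mono.ge_of_tendsto Td.norm m
    simpa using this
  have hc : ∀ m : ℕ, DD p m = DD p (0:ℕ) := by
    intro m
    induction m with
    | zero => rfl
    | succ k ih => rw [← ih]; exact (sub_eq_zero.mp (dz k)).symm
  have hn : ∀ m : ℕ, DD p m = (qPochInf (p^2) (p^2))⁻¹ := by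
    intro m
    rw [hc]
    refine tendsto_nhds_unique ?_ T
    simp only [hc]
    exact tendsto_const_nhds
  rcases le_total 0 m with h | h
  · lift m to ℕ using h; exact hn m
  · obtain ⟨k, rfl⟩ : ∃ k : ℕ, m = -(k:ℤ) := ⟨(-m).toNat, by omega⟩
    rw [← hn k, DD, DD, ← (Equiv.addRight (k:ℤ)).tsum_eq]
    congr 1; ext j
    simp only [Equiv.coe_addRight]
    rw [show j + k + -(k:ℤ) = j by ring, mul_comm (ee p j)]
    congr 2; ring

lemma conv_eq {p : ℂ} (h0 : 0 < ‖p‖) (h1 : ‖p‖ < 1) (m : ℤ) :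
    ∑' j : ℤ, p^((j+m)^2 + j^2) * (ee p (j+m) * ee p j) = p^(m^2) * (qPochInf (p^2) (p^2))⁻¹ := by
  have hp : p ≠ 0 := norm_pos_iff.mp h0
  rw [← DD_eq h0 h1 m, DD, ← tsum_mul_left]
  congr 1; ext j
  rw [← mul_assoc (p^(m^2)), ← zpow_add₀ hp, mul_comm (ee p j)]
  congr 2; ring

noncomputable def GG (q : ℂ) (c : ℤ) : ℂ := ∑' i : ℤ, q^(2*i^2 + c*i) * ee (q^2) i

lemma sq_lt {q : ℂ} (h1 : ‖q‖ < 1) : ‖q^2‖ < 1 := by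
  rw [norm_pow]; exact pow_lt_one₀ (norm_nonneg _) h1 two_ne_zero

lemma GG_sum {q : ℂ} (h0 : 0 < ‖q‖) (h1 : ‖q‖ < 1) (c : ℤ) (x : ℤ → ℤ) :
    Summable fun i : ℤ => ‖q^(2*i^2 + c*i) * ee (q^2) (x i)‖ := by
  obtain ⟨C, hC0, hC⟩ := ee_bdd (sq_lt h1)
  have := (thC h0 h1 (a := 2) (by norm_num) c 0).mul_right C
  refine Summable.of_nonneg_of_le (fun _ => norm_nonneg _) (fun n => ?_) this
  rw [norm_mul, add_zero]
  gcongr; apply hC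

lemma GG_rec {q : ℂ} (h0 : 0 < ‖q‖) (h1 : ‖q‖ < 1) (c : ℤ) :
    GG q c = (1 + q^(c+2)) * GG q (c+4) := by
  have hp : q ≠ 0 := norm_pos_iff.mp h0
  have e1 : ∑' i : ℤ, q^(2*i^2 + c*i) * ee (q^2) (i-1) = q^(c+2) * GG q (c+4) := by
    rw [← (Equiv.addRight (1:ℤ)).tsum_eq, GG, ← tsum_mul_left]
    congr 1; ext j
    simp only [Equiv.coe_addRight]
    rw [← mul_assoc, ← zpow_add₀ hp]
    congr 2
    · ring
    · ring
  rw [add_mul, one_mul, ← e1, GG, GG,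
    ← (GG_sum h0 h1 (c+4) (fun i => i)).of_norm.tsum_add (GG_sum h0 h1 c (fun i => i-1)).of_norm]
  congr 1; ext j
  rw [ee_rec (sq_lt h1) j]
  have z1 : q^(2*j^2 + (c+4)*j) = q^(2*j^2+c*j) * q^(4*j) := by
    rw [← zpow_add₀ hp]; congr 1; ring
  have z2 : (q^2)^(2*j) = q^(4*j) := by
    rw [← zpow_natCast, ← zpow_mul]; congr 1; push_cast; ring
  rw [z1, z2]; ring

lemma GG_iter {q : ℂ} (h0 : 0 < ‖q‖) (h1 : ‖q‖ < 1) (c : ℤ) (N : ℕ) :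
    GG q c = (∏ n ∈ Finset.range N, (1 + q^(c+2) * (q^4)^n)) * GG q (c+4*N) := by
  have hp : q ≠ 0 := norm_pos_iff.mp h0
  induction N with
  | zero => simp
  | succ k ih =>
    rw [ih, Finset.prod_range_succ, mul_assoc, GG_rec h0 h1 (c+4*k)]
    congr 2
    · rw [← pow_mul, ← zpow_natCast, ← zpow_add₀ hp]; congr 2; push_cast; ring
    · congr 1; push_cast; ring

lemma GG_lim {q : ℂ} (h0 : 0 < ‖q‖) (h1 : ‖q‖ < 1) (c : ℤ) :
    Tendsto (fun N : ℕ => GG q (c+4*N)) atTop (𝓝 1) := by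
  have hp : q ≠ 0 := norm_pos_iff.mp h0
  have key := tendsto_tsum_of_dominated_convergence (𝓕 := atTop)
    (f := fun (N : ℕ) (i : ℤ) => q^(2*i^2 + (c+4*N)*i) * ee (q^2) i)
    (g := fun i => if i = 0 then 1 else 0)
    (GG_sum h0 h1 c (fun i => i)) ?_ ?_
  · simpa [GG] using key
  · intro j
    rcases lt_trichotomy j 0 with h | h | h
    · simp [ee_neg _ h, h.ne]
    · subst h
      have e0 : ee (q^2) 0 = 1 := by simp [ee, qPoch]
      simp [e0]
    · rw [if_neg h.ne']
      lift j to ℕ using h.le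
      have hj : 4*j ≠ 0 := by omega
      have := tendsto_pow_atTop_nhds_zero_of_norm_lt_one (x := q^(4*j))
          (by rw [norm_pow]; exact (pow_lt_one₀ h0.le h1 hj))
      have t1 := (this.const_mul (q^(2*(j:ℤ)^2+c*j))).mul_const (ee (q^2) j)
      rw [mul_zero, zero_mul] at t1
      refine t1.congr fun N => ?_
      rw [← pow_mul, ← zpow_natCast, ← zpow_add₀ hp]
      congr 2; push_cast; ring
  · refine Eventually.of_forall fun m j => ?_
    rcases lt_or_ge j 0 with h | h
    · simp only [ee_neg _ h, mul_zero, norm_zero]; exact le_refl _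
    · rw [norm_mul, norm_mul]
      gcongr ?_ * ?_
      · rw [norm_zpow, norm_zpow]
        apply zpow_le_zpow_right_of_le_one₀ h0 h1.le
        have : 0 ≤ j * m := by positivity
        nlinarith

lemma GG_eq {q : ℂ} (h0 : 0 < ‖q‖) (h1 : ‖q‖ < 1) (c : ℤ) :
    GG q c = ∏' n : ℕ, (1 + q^(c+2) * (q^4)^n) := by
  have T := (mult_add h1 (q^(c+2)) (m := 4) (by norm_num)).tendsto_prod_tprod_nat.mul (GG_lim h0 h1 c)
  rw [mul_one] at T
  refine tendsto_nhds_unique ?_ T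
  simp only [← GG_iter h0 h1 c]
  exact tendsto_const_nhds

noncomputable def psi (q : ℂ) : ℂ := ∑' a : ℤ, q^(2*a^2 + a)

def shear : ℤ × ℤ ≃ ℤ × ℤ where
  toFun x := (x.2 + x.1, x.2)
  invFun x := (x.1 - x.2, x.2)
  left_inv x := by ext <;> simp
  right_inv x := by ext <;> simp

lemma GG_mul {q : ℂ} (h0 : 0 < ‖q‖) (h1 : ‖q‖ < 1) :
    GG q 1 * GG q (-1) = psi q * (qPochInf (q^4) (q^4))⁻¹ := by
  have hp : q ≠ 0 := norm_pos_iff.mp h0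
  have s1 := GG_sum h0 h1 1 (fun i => i)
  have s2 := GG_sum h0 h1 (-1) (fun i => i)
  have h0' : 0 < ‖q^2‖ := by rw [norm_pow]; positivity
  rw [GG, GG, tsum_mul_tsum_of_summable_norm s1 s2, ← shear.tsum_eq]
  have S := shear.summable_iff.mpr (summable_mul_of_summable_norm s1 s2)
  refine (Summable.tsum_prod S).trans ?_
  rw [psi, ← tsum_mul_right]
  congr 1; ext m
  have := conv_eq h0' (sq_lt h1) m
  simp only [← pow_mul] at this
  norm_num at this
  have e : ((q^2)^(m^2) : ℂ) = q^(2*m^2) := by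
    rw [← zpow_natCast, ← zpow_mul]; push_cast; rfl
  rw [zpow_add₀ hp, ← e, mul_comm ((q^2)^(m^2)), mul_assoc, ← this, ← tsum_mul_left]
  congr 1; ext j
  simp only [Function.comp, shear, Equiv.coe_fn_mk]
  rw [show ((q^2)^((j+m)^2+j^2) : ℂ) = q^(2*((j+m)^2+j^2)) by
    rw [← zpow_natCast, ← zpow_mul]; push_cast; rfl]
  rw [← mul_assoc (q^m), ← zpow_add₀ hp, mul_mul_mul_comm, ← zpow_add₀ hp]
  congr 2; ring

lemma psi_eq {q : ℂ} (h0 : 0 < ‖q‖) (h1 : ‖q‖ < 1) : J q 1 * psi q = (J q 2)^2 := by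
  have hp : q ≠ 0 := norm_pos_iff.mp h0
  have hP : qPochInf (q^4) (q^4) ≠ 0 := by
    have := P_ne (sq_lt h1)
    simpa only [← pow_mul] using this
  have hm := GG_mul h0 h1
  rw [GG_eq h0 h1, GG_eq h0 h1] at hm
  set O := ∏' n : ℕ, (1 - q * (q^2)^n) with hO
  -- J1 = O * J2
  have a1 : J q 1 = O * J q 2 := by
    unfold J qPochInf
    rw [← tprod_even_mul_odd (f := fun n : ℕ => 1 - q^1 * (q^1)^n)]
    · congr 1
      · apply tprod_congr; intro n; ring
      · apply tprod_congr; intro n; ring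
    · exact (mult_sub h1 q two_ne_zero).congr fun n => by ring
    · exact (mult_sub h1 (q^2) two_ne_zero).congr fun n => by ring
  have a2 : J q 2 = (∏' n : ℕ, (1 - q^2 * (q^4)^n)) * qPochInf (q^4) (q^4) := by
    unfold J qPochInf
    rw [← tprod_even_mul_odd (f := fun n : ℕ => 1 - q^2 * (q^2)^n)]
    · congr 1
      · apply tprod_congr; intro n; ring
      · apply tprod_congr; intro n; ring
    · exact (mult_sub h1 (q^2) (m := 4) (by norm_num)).congr fun n => by ring
    · exact (mult_sub h1 (q^4) (m := 4) (by norm_num)).congr fun n => by ring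
  have a3 : (∏' n : ℕ, (1 + q^((1:ℤ)+2) * (q^4)^n)) * (∏' n : ℕ, (1 + q^((-1:ℤ)+2) * (q^4)^n))
      = ∏' n : ℕ, (1 + q * (q^2)^n) := by
    have z3 : q^((1:ℤ)+2) = q^3 := by exact zpow_natCast q 3
    have z1 : q^((-1:ℤ)+2) = q := by norm_num
    rw [z3, z1, mul_comm, ← tprod_even_mul_odd (f := fun n : ℕ => 1 + q * (q^2)^n)]
    · congr 1
      · apply tprod_congr; intro n; ring
      · apply tprod_congr; intro n; ring
    · exact (mult_add h1 q (m := 4) (by norm_num)).congr fun n => by ring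
    · exact (mult_add h1 (q^3) (m := 4) (by norm_num)).congr fun n => by ring
  have a4 : O * ∏' n : ℕ, (1 + q * (q^2)^n) = ∏' n : ℕ, (1 - q^2 * (q^4)^n) := by
    rw [hO, ← (mult_sub h1 q two_ne_zero).tprod_mul (mult_add h1 q two_ne_zero)]
    apply tprod_congr; intro n; ring
  rw [a3] at hm
  have hm' : psi q = (∏' n : ℕ, (1 + q * (q^2)^n)) * qPochInf (q^4) (q^4) := by
    rw [hm, inv_mul_cancel_right₀ hP]
  rw [a1, hm']
  calc _ = J q 2 * ((O * ∏' n : ℕ, (1 + q * (q^2)^n)) * qPochInf (q^4) (q^4)) := by ring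
    _ = _ := by rw [a4, ← a2, sq]

noncomputable def cc (q : ℂ) (t : ℤ) : ℂ :=
  ∑' l : ℤ, q^((l+t)^2 + l^2 + (l+t) + l) * (ee q (l+t) * ee q l)

lemma cc_neg (q : ℂ) (t : ℤ) : cc q (-t) = cc q t := by
  rw [cc, cc, ← (Equiv.addRight t).tsum_eq]
  congr 1; ext j
  simp only [Equiv.coe_addRight]
  rw [show j + t + -t = j by ring, mul_comm (ee q j)]
  congr 2; ring

lemma cc_add {q : ℂ} (h0 : 0 < ‖q‖) (h1 : ‖q‖ < 1) (t : ℤ) :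
    cc q t + cc q (t+1) = q^(t^2+t) * (qPochInf (q^2) (q^2))⁻¹ := by
  have hp : q ≠ 0 := norm_pos_iff.mp h0
  have S : ∀ t, Summable fun l : ℤ => q^((l+t)^2 + l^2 + (l+t) + l) * (ee q (l+t) * ee q l) :=
    fun t => thE h0 h1 (a := 2) (by norm_num) (2*t+2) (t^2+t) (fun l => l+t) (fun l => l) _
      (fun n => by ring)
  have e : q^(t^2+t) = q^(-t-1) * q^((t+1)^2) := by
    rw [← zpow_add₀ hp]; congr 1; ring
  rw [e, mul_assoc, ← conv_eq h0 h1 (t+1), ← tsum_mul_left, cc, cc, ← (S t).tsum_add (S (t+1))]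
  congr 1; ext l
  have r := ee_rec h1 (l+t+1)
  rw [show l+t+1-1 = l+t by ring] at r
  rw [r, ← add_assoc l t 1]
  have z1 : q^((l+t+1)^2 + l^2 + (l+t+1) + l) = q^((l+t)^2 + l^2 + (l+t) + l) * q^(2*(l+t+1)) := by
    rw [← zpow_add₀ hp]; congr 1; ring
  have z2 : q^((l+t+1)^2 + l^2) = q^((l+t)^2 + l^2 + (l+t) + l) * q^(t+1) := by
    rw [← zpow_add₀ hp]; congr 1; ring
  have z3 : q^(-t-1) * q^(t+1) = 1 := by
    rw [← zpow_add₀ hp]; simp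
  rw [z1, z2]
  linear_combination (-(q^((l+t)^2 + l^2 + (l+t) + l) * ee q (l+t+1) * ee q l)) * z3

def parMap : (ℤ × ℤ) ⊕ (ℤ × ℤ) → ℤ × ℤ :=
  Sum.elim (fun x => (x.1 - x.2 + 1, -2*x.2)) (fun x => (x.2 - x.1 + 1, 2*x.2+1))

lemma parMap_bij : Function.Bijective parMap := by
  constructor
  · rintro (⟨a,c⟩|⟨a,c⟩) (⟨a',c'⟩|⟨a',c'⟩) h <;> simp [parMap] at h ⊢ <;> omega
  · rintro ⟨r,u⟩
    rcases Int.even_or_odd' u with ⟨c, rfl | rfl⟩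
    · exact ⟨Sum.inl (r - c - 1, -c), by simp [parMap]; try ring⟩
    · exact ⟨Sum.inr (c - r + 1, c), by simp [parMap]; try ring⟩

noncomputable def thf (q : ℂ) (x : ℤ × ℤ) : ℂ := q^(2*x.1^2 - 3*x.1 + 2*x.2^2 - 2*x.2*x.1)

lemma thf_sum {q : ℂ} (h0 : 0 < ‖q‖) (h1 : ‖q‖ < 1) : Summable (thf q) := by
  have hp : q ≠ 0 := norm_pos_iff.mp h0
  have := (th_sum h0 h1 (le_refl 1) (-3)).mul_of_nonneg (th_sum h0 h1 (le_refl 1) 0)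
    (fun n => by positivity) (fun n => by positivity)
  refine Summable.of_norm_bounded this fun x => ?_
  rw [thf, norm_zpow, ← zpow_add₀ h0.ne']
  apply zpow_le_zpow_right_of_le_one₀ h0 h1.le
  nlinarith [sq_nonneg (x.2 - x.1)]

lemma thf_eq {q : ℂ} (h0 : 0 < ‖q‖) (h1 : ‖q‖ < 1) :
    ∑' x, thf q x = 2 * (q^(-1:ℤ) * (psi q * psi (q^3))) := by
  have hp : q ≠ 0 := norm_pos_iff.mp h0
  have h0' : 0 < ‖q^3‖ := by rw [norm_pow]; positivity
  have h1' : ‖q^3‖ < 1 := by rw [norm_pow]; exact pow_lt_one₀ h0.le h1 (by norm_num)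
  have s1 := thC h0 h1 (a := 2) (by norm_num) 1 0
  have s2 := thC h0' h1' (a := 2) (by norm_num) 1 0
  simp only [one_mul, add_zero] at s1 s2
  have S := (Equiv.ofBijective _ parMap_bij).summable_iff.mpr (thf_sum h0 h1)
  rw [← (Equiv.ofBijective _ parMap_bij).tsum_eq]
  have z3 : ∀ n : ℤ, (q^3)^n = q^(3*n) := fun n => by
    rw [← zpow_natCast, ← zpow_mul]; push_cast; rfl
  refine (Summable.tsum_sum (S.comp_injective Sum.inl_injective)
    (S.comp_injective Sum.inr_injective)).trans ?_
  rw [two_mul, psi, psi, tsum_mul_tsum_of_summable_norm s1 s2, ← tsum_mul_left]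
  congr 1
  · congr 1; ext x
    simp only [Function.comp, Equiv.ofBijective_apply, parMap, Sum.elim_inl, thf]
    rw [z3, ← zpow_add₀ hp, ← zpow_add₀ hp]
    congr 1; ring
  · congr 1; ext x
    simp only [Function.comp, Equiv.ofBijective_apply, parMap, Sum.elim_inr, thf]
    rw [z3, ← zpow_add₀ hp, ← zpow_add₀ hp]
    congr 1; ring

def EE (i j k l : ℤ) : ℤ := 2*i^2 + 2*j^2 + 2*k^2 + 2*l^2 - 2*i*j - 2*i*k - 2*i*l + 2*j*k
  + 2*j*l - 3*i + 3*j + 3*k + 2*l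

noncomputable def gg (q : ℂ) (x : ℤ × ℤ × ℤ × ℤ) : ℂ :=
  q^(EE x.1 x.2.1 x.2.2.1 x.2.2.2) * (ee q x.1 * ee q x.2.1 * (ee q x.2.2.1 * ee q x.2.2.2))

def Phi : ((ℤ × ℤ) × ℤ) × ℤ ≃ ℤ × ℤ × ℤ × ℤ where
  toFun x := (x.2 + (x.1.2 + x.1.1.2), x.2, x.1.2 + (x.1.1.2 - x.1.1.1), x.1.2)
  invFun x := (((x.1 - x.2.1 - x.2.2.1, x.1 - x.2.1 - x.2.2.2), x.2.2.2), x.2.1)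
  left_inv x := by
    rcases x with ⟨⟨⟨r,u⟩,l⟩,j⟩
    simp only [Prod.mk.injEq, and_true]; constructor <;> ring
  right_inv x := by
    rcases x with ⟨i,j,k,l⟩
    simp only [Prod.mk.injEq, and_true, true_and]; constructor <;> ring

lemma gg_sum {q : ℂ} (h0 : 0 < ‖q‖) (h1 : ‖q‖ < 1) : Summable (gg q) := by
  have hp : q ≠ 0 := norm_pos_iff.mp h0
  obtain ⟨C, hC0, hC⟩ := ee_bdd h1
  set s := √‖q‖ with hs
  have s0 : 0 < s := Real.sqrt_pos.mpr h0
  have s1 : s < 1 := by rw [hs, Real.sqrt_lt' one_pos]; simpa using h1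
  have ss : ‖q‖ = s^2 := (Real.sq_sqrt h0.le).symm
  have T := fun c => th_sum s0 s1 (a := 2) (by norm_num) c
  have P := (((T (-1)).mul_of_nonneg (T 1) (fun n => by positivity) (fun n => by positivity)).mul_of_nonneg
    (T 1) (fun n => by positivity) (fun n => by positivity)).mul_of_nonneg
    (T 5) (fun n => by positivity) (fun n => by positivity)
  have inj : Function.Injective (fun x : ℤ × ℤ × ℤ × ℤ => 
      (((x.1, x.2.1), x.2.2.1 - x.2.2.2), x.2.2.1 + x.2.2.2 - x.1 + x.2.1)) := by
    rintro ⟨i,j,k,l⟩ ⟨i',j',k',l'⟩ h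
    simp only [Prod.mk.injEq] at h ⊢
    omega
  refine Summable.of_norm_bounded ((P.comp_injective inj).mul_right (C*C*(C*C))) fun x => ?_
  rw [gg, norm_mul, norm_mul, norm_mul, norm_mul]
  have e : ‖q ^ (EE x.1 x.2.1 x.2.2.1 x.2.2.2)‖ = s ^ (2 * EE x.1 x.2.1 x.2.2.1 x.2.2.2) := by
    rw [norm_zpow, ss, ← zpow_natCast, ← zpow_mul]; rfl
  have e2 : ∀ g : ℤ × ℤ × ℤ × ℤ → ℝ, g x = s ^ (2 * EE x.1 x.2.1 x.2.2.1 x.2.2.2) →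
      ‖q ^ (EE x.1 x.2.1 x.2.2.1 x.2.2.2)‖ * (‖ee q x.1‖ * ‖ee q x.2.1‖ *
        (‖ee q x.2.2.1‖ * ‖ee q x.2.2.2‖)) ≤ g x * (C*C*(C*C)) := by
    intro g hg
    rw [hg, e]
    gcongr <;> apply hC
  apply e2
  simp only [Function.comp]
  rw [← zpow_add₀ s0.ne', ← zpow_add₀ s0.ne', ← zpow_add₀ s0.ne']
  congr 1; simp only [EE]; ring

lemma gg_tsum {q : ℂ} (h0 : 0 < ‖q‖) (h1 : ‖q‖ < 1) :
    ∑' x, gg q x = (qPochInf (q^2) (q^2))⁻¹^2 * (q^(-1:ℤ) * (psi q * psi (q^3))) := by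
  have hp : q ≠ 0 := norm_pos_iff.mp h0
  set P := (qPochInf (q^2) (q^2))⁻¹ with hP
  have hP0 : P ≠ 0 := inv_ne_zero (P_ne h1)
  have S := Phi.summable_iff.mpr (gg_sum h0 h1)
  have i1 : ∀ y : (ℤ × ℤ) × ℤ, ∑' j : ℤ, (gg q ∘ Phi) (y, j) =
      P * (q^(y.1.1^2 - 2*y.1.1 + y.1.2^2 - y.1.2) *
        (q^((y.2+(y.1.2-y.1.1))^2 + y.2^2 + (y.2+(y.1.2-y.1.1)) + y.2) *
          (ee q (y.2+(y.1.2-y.1.1)) * ee q y.2))) := by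
    rintro ⟨⟨r,u⟩,l⟩
    dsimp only
    rw [← mul_assoc (q^_) (q^_), ← zpow_add₀ hp]
    have e := conv_eq h0 h1 (l+u)
    set m := l+u with hm
    have z : q^(r^2 - 2*r + u^2 - u + ((l+(u-r))^2 + l^2 + (l+(u-r)) + l)) =
      q^(m^2) * q^(r^2 - 2*r + u^2 - u + ((l+(u-r))^2 + l^2 + (l+(u-r)) + l) - m^2) := by
      rw [← zpow_add₀ hp]; congr 1; ring
    rw [z, ← mul_assoc P, ← mul_assoc P, mul_comm P, hP, ← e, mul_assoc, ← tsum_mul_right]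
    congr 1; ext j
    simp only [Function.comp, gg, Phi, Equiv.coe_fn_mk]
    have z' : q ^ EE (j+(l+u)) j (l+(u-r)) l = q^((j+m)^2 + j^2) *
      q^(r^2 - 2*r + u^2 - u + ((l+(u-r))^2 + l^2 + (l+(u-r)) + l) - m^2) := by
      rw [← zpow_add₀ hp]; congr 1; rw [EE, hm]; ring
    rw [z', ← hm]; ring
  have S2 := S.prod
  have i2 : ∀ x : ℤ × ℤ, ∑' l : ℤ, ∑' j : ℤ, (gg q ∘ Phi) ((x, l), j) =
      P * (q^(x.1^2 - 2*x.1 + x.2^2 - x.2) * cc q (x.2 - x.1)) := by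
    intro x
    simp only [i1]
    rw [tsum_mul_left, tsum_mul_left, cc]
  have S3 := S2.prod
  simp only [i2] at S3
  have S4 := (summable_mul_left_iff hP0).mp S3
  have A : ∑' x, gg q x = P * ∑' x : ℤ × ℤ, q^(x.1^2 - 2*x.1 + x.2^2 - x.2) * cc q (x.2 - x.1) := by
    rw [← Phi.tsum_eq, ← tsum_mul_left]
    refine (Summable.tsum_prod S).trans ((Summable.tsum_prod S2).trans ?_)
    simp only [i2]
  set X := ∑' x : ℤ × ℤ, q^(x.1^2 - 2*x.1 + x.2^2 - x.2) * cc q (x.2 - x.1) with hX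
  let R : ℤ × ℤ ≃ ℤ × ℤ := (Equiv.subLeft (2:ℤ)).prodCongr (Equiv.subLeft (1:ℤ))
  have t : ∀ x : ℤ × ℤ, q^((R x).1^2 - 2*(R x).1 + (R x).2^2 - (R x).2) * cc q ((R x).2 - (R x).1)
      = q^(x.1^2 - 2*x.1 + x.2^2 - x.2) * cc q (x.2 - x.1 + 1) := by
    intro x
    simp only [R, Equiv.prodCongr_apply, Prod.map, Equiv.subLeft_apply]
    rw [← cc_neg q (x.2 - x.1 + 1)]
    congr 2 <;> ring
  have S5 := R.summable_iff.mpr S4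
  have B : X = ∑' x : ℤ × ℤ, q^(x.1^2 - 2*x.1 + x.2^2 - x.2) * cc q (x.2 - x.1 + 1) := by
    rw [hX, ← R.tsum_eq]
    exact tsum_congr t
  have S6 : Summable fun x : ℤ × ℤ => q^(x.1^2 - 2*x.1 + x.2^2 - x.2) * cc q (x.2 - x.1 + 1) :=
    S5.congr fun x => (t x)
  have D : X + X = (∑' x, thf q x) * P := by
    nth_rw 2 [B]
    rw [hX, ← S4.tsum_add S6, ← tsum_mul_right]
    congr 1; ext x
    rw [← mul_add, cc_add h0 h1, ← mul_assoc, ← zpow_add₀ hp, thf]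
    congr 2; ring
  rw [thf_eq h0 h1] at D
  rw [A]
  linear_combination P / 2 * D

theorem stmt_8 (q : ℂ) (h0 : 0 < ‖q‖) (h1 : ‖q‖ < 1) :
    (∑' p : ℕ × ℕ × ℕ × ℕ,
      (fun (i j k l : ℕ) =>
        q ^ ((2*(i:ℤ)^2 + 2*(j:ℤ)^2 + 2*(k:ℤ)^2 + 2*(l:ℤ)^2 - 2*(i:ℤ)*(j:ℤ) - 2*(i:ℤ)*(k:ℤ) - 2*(i:ℤ)*(l:ℤ) + 2*(j:ℤ)*(k:ℤ) + 2*(j:ℤ)*(l:ℤ) - 3*(i:ℤ) + 3*(j:ℤ) + 3*(k:ℤ) + 2*(l:ℤ)) : ℤ) /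
          (qPoch (q ^ 2) (q ^ 2) i * qPoch (q ^ 2) (q ^ 2) j * qPoch (q ^ 2) (q ^ 2) k * qPoch (q ^ 2) (q ^ 2) l))
        p.1 p.2.1 p.2.2.1 p.2.2.2)
    = q ^ ((-1 : ℤ)) * (J q 6)^2 / (J q 1 * J q 3) := by
  have hp : q ≠ 0 := norm_pos_iff.mp h0
  have h0' : 0 < ‖q^3‖ := by rw [norm_pow]; positivity
  have h1' : ‖q^3‖ < 1 := by rw [norm_pow]; exact pow_lt_one₀ h0.le h1 (by norm_num)
  have e1 := psi_eq h0 h1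
  have e3 := psi_eq h0' h1'
  have ej : J (q^3) 1 = J q 3 := by simp [J]
  have ej2 : J (q^3) 2 = J q 6 := by simp only [J, ← pow_mul]
  rw [ej, ej2] at e3
  have ne : ∀ m : ℕ, m ≠ 0 → J q m ≠ 0 := by
    intro m hm
    have hl : ∀ n : ℕ, 1 + -(q^m) * (q^m)^n ≠ 0 := by
      intro n h
      have h2 : ‖q^m * (q^m)^n‖ < 1 := by
        rw [← pow_succ', ← pow_mul, norm_pow]
        exact pow_lt_one₀ (norm_nonneg _) h1 (by positivity)
      rw [show q^m * (q^m)^n = 1 by linear_combination -h] at h2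
      simp at h2
    have := tprod_one_add_ne_zero_of_summable hl (geo_sum h1 _ hm)
    simpa [J, qPochInf, sub_eq_add_neg] using this
  have n1 := ne 1 (by norm_num)
  have n2 := ne 2 (by norm_num)
  have n3 := ne 3 (by norm_num)
  have G := gg_tsum h0 h1
  rw [show qPochInf (q^2) (q^2) = J q 2 from rfl] at G
  have R : q ^ ((-1 : ℤ)) * (J q 6)^2 / (J q 1 * J q 3)
      = (J q 2)⁻¹^2 * (q^(-1:ℤ) * (psi q * psi (q^3))) := by
    rw [div_eq_iff (mul_ne_zero n1 n3), ← e3]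
    have : (J q 2)⁻¹^2 * (J q 1 * psi q) = 1 := by
      rw [e1, ← mul_pow, inv_mul_cancel₀ n2, one_pow]
    linear_combination (-(q^(-1:ℤ) * J q 3 * psi (q^3))) * this
  rw [R, ← G]
  have inj : Function.Injective (fun x : ℕ × ℕ × ℕ × ℕ =>
      (((x.1 : ℤ), (x.2.1 : ℤ), (x.2.2.1 : ℤ), (x.2.2.2 : ℤ)) : ℤ × ℤ × ℤ × ℤ)) := by
    rintro ⟨i,j,k,l⟩ ⟨i',j',k',l'⟩ h
    simpa using h
  rw [← inj.tsum_eq]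
  · apply tsum_congr
    rintro ⟨i,j,k,l⟩
    simp only [gg, ee_nat, EE, div_eq_mul_inv, mul_inv]
    ring
  · rintro ⟨i,j,k,l⟩ h
    have hh : gg q (i,j,k,l) ≠ 0 := h
    simp only [gg, ne_eq, mul_eq_zero, not_or] at hh
    have nn : ∀ n, ¬ ee q n = 0 → 0 ≤ n := fun n hn => by
      by_contra hc
      exact hn (ee_neg _ (by omega))
    obtain ⟨-, ⟨hi, hj⟩, hk, hl⟩ := hh
    refine ⟨(i.toNat, j.toNat, k.toNat, l.toNat), ?_⟩
    simp [nn _ hi, nn _ hj, nn _ hk, nn _ hl]
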